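/- Let F be a propositional formula built from propositional formulas F₁,…,F_m using only the connectives ∧, ∨, →, ¬, ⊤, ⊥. Then for every Heyting algebra H and every valuation v of propositional formulas in H that interprets ∧, ∨, → by the Heyting operations ⊓, ⊔, ⇨ and interprets ¬G as v(G) ⇨ ⊥, the inequality ⨅_{i=1}^m (v(Fᵢ) ⊔ (v(Fᵢ) ⇨ ⊥)) ≤ v(F) ⊔ (v(F) ⇨ ⊥) holds. (By algebraic completeness of intuitionistic propositional logic, this expresses that F ∨ ¬F is intuitionistically derivable from the hypotheses F₁ ∨ ¬F₁, …, F_m ∨ ¬F_m.) -/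

import Mathlib

/-- Propositional formulas built from generators (here: the formulas `F₁,…,F_m`,
represented by variables) using `∧`, `∨`, `→`, `¬`, `⊤`, `⊥`. -/
inductive PropForm (α : Type) where
  | var : α → PropForm α
  | top : PropForm α
  | bot : PropForm α
  | and : PropForm α → PropForm α → PropForm α
  | or : PropForm α → PropForm α → PropForm α
  | imp : PropForm α → PropForm α → PropForm α
  | not : PropForm α → PropForm α

/-- Evaluation of a propositional formula in a Heyting algebra: `∧`, `∨`, `→` are
interpreted by `⊓`, `⊔`, `⇨`, and `¬ G` by `v(G) ⇨ ⊥`. -/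
def PropForm.eval {α : Type} {H : Type*} [HeytingAlgebra H] (v : α → H) :
    PropForm α → H
  | .var a => v a
  | .top => ⊤
  | .bot => ⊥
  | .and F G => F.eval v ⊓ G.eval v
  | .or F G => F.eval v ⊔ G.eval v
  | .imp F G => F.eval v ⇨ G.eval v
  | .not F => F.eval v ⇨ ⊥

theorem em_cases {H : Type*} [HeytingAlgebra H] {x p q r s z : H}
    (h₁ : x ≤ p ⊔ q) (h₂ : x ≤ r ⊔ s) (hpr : p ⊓ r ≤ z) (hps : p ⊓ s ≤ z)
    (hqr : q ⊓ r ≤ z) (hqs : q ⊓ s ≤ z) : x ≤ z := by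
  refine (le_inf h₁ h₂).trans ?_
  rw [inf_sup_right, inf_sup_left, inf_sup_left]
  exact sup_le (sup_le hpr hps) (sup_le hqr hqs)

theorem em_absurd {H : Type*} [HeytingAlgebra H] {y a z : H}
    (h₁ : y ≤ a) (h₂ : y ≤ a ⇨ ⊥) : y ≤ z :=
  ((le_inf h₂ h₁).trans himp_inf_le).trans bot_le

/-- If `F` is a propositional combination of `F₁,…,F_m`, then in every Heyting algebra
`⨅ᵢ (v(Fᵢ) ⊔ (v(Fᵢ) ⇨ ⊥)) ≤ v(F) ⊔ (v(F) ⇨ ⊥)`; i.e., `F ∨ ¬F` is intuitionistically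
derivable from `F₁ ∨ ¬F₁, …, F_m ∨ ¬F_m`. -/
theorem excluded_middle_combination (m : ℕ) (F : PropForm (Fin m))
    (H : Type*) [HeytingAlgebra H] (v : Fin m → H) :
    (Finset.univ.inf fun i : Fin m => v i ⊔ (v i ⇨ ⊥)) ≤
      F.eval v ⊔ (F.eval v ⇨ ⊥) := by
  induction F with
  | var i => exact Finset.inf_le (Finset.mem_univ i)
  | top => exact le_sup_of_le_left le_top
  | bot => exact le_sup_of_le_right (le_himp_iff.2 inf_le_right)
  | and F G hF hG =>
    simp only [PropForm.eval]
    refine em_cases hF hG le_sup_left (le_sup_of_le_right ?_) (le_sup_of_le_right ?_)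
      (le_sup_of_le_right ?_) <;> rw [le_himp_iff]
    · exact em_absurd (inf_le_right.trans inf_le_right) (inf_le_left.trans inf_le_right)
    · exact em_absurd (inf_le_right.trans inf_le_left) (inf_le_left.trans inf_le_left)
    · exact em_absurd (inf_le_right.trans inf_le_left) (inf_le_left.trans inf_le_left)
  | or F G hF hG =>
    simp only [PropForm.eval]
    refine em_cases hF hG (le_sup_of_le_left (inf_le_left.trans le_sup_left))
      (le_sup_of_le_left (inf_le_left.trans le_sup_left))
      (le_sup_of_le_left (inf_le_right.trans le_sup_right)) (le_sup_of_le_right ?_)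
    rw [sup_himp_distrib]
  | imp F G hF hG =>
    simp only [PropForm.eval]
    refine em_cases hF hG (le_sup_of_le_left ?_) (le_sup_of_le_right ?_)
      (le_sup_of_le_left ?_) (le_sup_of_le_left ?_) <;> rw [le_himp_iff]
    · exact inf_le_left.trans inf_le_right
    · exact em_absurd ((le_inf inf_le_right (inf_le_left.trans inf_le_left)).trans himp_inf_le)
        (inf_le_left.trans inf_le_right)
    · exact em_absurd inf_le_right (inf_le_left.trans inf_le_left)
    · exact em_absurd inf_le_right (inf_le_left.trans inf_le_left)
  | not F hF =>
    simp only [PropForm.eval]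
    refine hF.trans (sup_le (le_sup_of_le_right ?_) le_sup_left)
    rw [le_himp_iff]
    exact em_absurd inf_le_left inf_le_right
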